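/- Let S ⊆ 2^[n] be a set system and let m ≥ 1 be an integer. Define the duplicated set system S' ⊆ 2^{[n]×[m]} by S' = { S × [m] : S ∈ S }, i.e., each set s ∈ S is expanded so that it contains the pair (i, j) for every i ∈ s and every j ∈ [m]. Then HHdim(S') = HHdim(S). -/

import Mathlib

/-!
Both inequalities transfer a vector between the two ground sets and inject its heavy hitters.

* A vector `v` on `[n] × [m]` is sent to the indicator `w` of the projection of its support to
  `[n]`. If `supp v ∩ (s × [m]) = {(i, j)}` then `supp w ∩ s = {i}`. The projection is injective on
  heavy hitters: a set isolating `(i, j)` contains the whole fibre over `i`, so no other point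
  of that fibre lies in the support.
* A vector `w` on `[n]` is placed on a single copy `[n] × {j₀}`, which exists as `m ≥ 1`; the map
  `i ↦ (i, j₀)` then sends heavy hitters to heavy hitters.
-/

/-- The support of a vector `v`: the set of its non-zero coordinates. -/
def vecSupp {α : Type*} (v : α → ℝ) : Set α := {i | v i ≠ 0}

/-- The set of heavy hitters of `v` induced by the set system `S`:
indices `i` such that some member `s ∈ S` satisfies `supp(v) ∩ s = {i}`. -/
def HHset {α : Type*} (S : Set (Set α)) (v : α → ℝ) : Set α :=
  {i | ∃ s ∈ S, vecSupp v ∩ s = {i}}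

/-- The heavy-hitter dimension of a set system: the supremum over vectors `v`
of the number of heavy hitters induced by `S`. -/
noncomputable def HHdim {α : Type*} (S : Set (Set α)) : ℕ :=
  sSup {k | ∃ v : α → ℝ, (HHset S v).ncard = k}

/-- On a finite ground set the supremum defining `HHdim` is over a bounded set, so it is a genuine
upper bound rather than the junk value `0`. -/
lemma ncard_HHset_le_HHdim {α : Type*} [Finite α] (S : Set (Set α)) (v : α → ℝ) :
    (HHset S v).ncard ≤ HHdim S := by
  refine le_csSup ⟨Nat.card α, ?_⟩ ⟨v, rfl⟩
  rintro k ⟨w, rfl⟩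
  exact Set.ncard_le_card _

lemma HHdim_le {α : Type*} (S : Set (Set α)) (b : ℕ)
    (h : ∀ v : α → ℝ, (HHset S v).ncard ≤ b) : HHdim S ≤ b := by
  refine csSup_le ⟨_, 0, rfl⟩ ?_
  rintro k ⟨v, rfl⟩
  exact h v

lemma mem_HHset_iff {α : Type*} (S : Set (Set α)) (v : α → ℝ) (i : α) :
    i ∈ HHset S v ↔ ∃ s ∈ S, ∀ x, (v x ≠ 0 ∧ x ∈ s) ↔ x = i := by
  simp only [HHset, vecSupp, Set.ext_iff, Set.mem_ofPred_eq, Set.mem_inter_iff,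
    Set.mem_singleton_iff]

/-- Duplicating every coordinate `m ≥ 1` times (replacing each set
`s ∈ S` by `s × [m]` over the ground set `[n] × [m]`) does not change the
heavy-hitter dimension. -/
theorem HHdim_duplicate_eq {n m : ℕ} (hm : 1 ≤ m) (S : Set (Set (Fin n))) :
    HHdim ((fun s : Set (Fin n) => s ×ˢ (Set.univ : Set (Fin m))) '' S) = HHdim S := by
  classical
  apply le_antisymm
  · refine HHdim_le _ _ fun v => ?_
    refine le_trans ?_ (ncard_HHset_le_HHdim S fun i => if ∃ j, v (i, j) ≠ 0 then 1 else 0)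
    refine Set.ncard_le_ncard_of_injOn Prod.fst ?_ ?_
    · rintro ⟨i, j⟩ h
      obtain ⟨_, ⟨s, hs, rfl⟩, h⟩ := (mem_HHset_iff _ _ _).1 h
      refine (mem_HHset_iff _ _ _).2 ⟨s, hs, fun x => ⟨?_, ?_⟩⟩
      · rintro ⟨hx, hxs⟩
        obtain ⟨k, hk⟩ : ∃ k, v (x, k) ≠ 0 := by
          by_contra hc
          exact hx (if_neg hc)
        exact congrArg Prod.fst ((h (x, k)).1 ⟨hk, hxs, trivial⟩)
      · rintro rfl
        obtain ⟨hv, hxs, -⟩ := (h (x, j)).2 rfl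
        have hex : ∃ k, v (x, k) ≠ 0 := ⟨j, hv⟩
        exact ⟨by simp only [if_pos hex]; exact one_ne_zero, hxs⟩
    · rintro ⟨i, j⟩ h ⟨i', j'⟩ h' (rfl : i = i')
      obtain ⟨_, ⟨s, hs, rfl⟩, h⟩ := (mem_HHset_iff _ _ _).1 h
      obtain ⟨_, ⟨s', hs', rfl⟩, h'⟩ := (mem_HHset_iff _ _ _).1 h'
      exact ((h (i, j')).1 ⟨((h' (i, j')).2 rfl).1, ((h (i, j)).2 rfl).2.1, trivial⟩).symm
  · refine HHdim_le _ _ fun w => ?_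
    let j₀ : Fin m := ⟨0, hm⟩
    refine le_trans ?_ (ncard_HHset_le_HHdim _ fun p : Fin n × Fin m =>
      if p.2 = j₀ then w p.1 else 0)
    refine Set.ncard_le_ncard_of_injOn (fun i => (i, j₀)) ?_
      (fun a _ b _ hab => congrArg Prod.fst hab)
    intro i h
    obtain ⟨s, hs, h⟩ := (mem_HHset_iff _ _ _).1 h
    refine (mem_HHset_iff _ _ _).2 ⟨_, ⟨s, hs, rfl⟩, ?_⟩
    rintro ⟨x, k⟩
    have hx := h x
    by_cases hk : k = j₀ <;> simp_all
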